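/- arXiv:2112.00609 — 4 statements merged into one kernel-verified Lean document; each statement's English description precedes it below -/
import Mathlib

section
/- Let K = ℚ(X, T) be the field of rational functions in two variables X, T over ℚ, set L = X⁶, and for natural numbers N ≥ 1, ν ≥ 1 define G(N,ν) = (L−1)·T^N / (L^ν − T^N) ∈ K. Set A = X⁶ + X⁴ + X³ + X², and define Z₁ = L^{−3}·( A·G(12,10)·G(6,5) + G(1,1)·G(12,10)·G(6,5) ) and Z₂ = L^{−3}·( (L²−L)·G(18,15) + (L−1)·G(1,1)·G(18,15) + A·G(12,10)·G(18,15) + G(1,1)·G(12,10)·G(18,15) + A·G(6,5)·G(18,15) + G(1,1)·G(6,5)·G(18,15) ). Then Z₁ − Z₂ = L^{−3}·(X⁴+X³+X²)·(L−1)²·T^{18}/(L^{15} − T^{18}), and in particular Z₁ ≠ Z₂. -/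
/-! Writing `q = L - 1`, `a = L ^ ν₁ / T ^ N₁` and `b = L ^ ν₂ / T ^ N₂`, one has
`G N₁ ν₁ = q / (a - 1)`, and `a * b - 1 = (a - 1) * (b - 1) + (a - 1) + (b - 1)` gives
`G N₁ ν₁ * G N₂ ν₂ = G (N₁ + N₂) (ν₁ + ν₂) * (q + G N₁ ν₁ + G N₂ ν₂)` (`G_mul_G`), the usual
blow-up relation. Substituting it into `Z₁`, every term of `Z₁ - Z₂` cancels except
`L ^ (-3) * G 18 15 * q * (A - L)`, and `A - L = X ^ 4 + X ^ 3 + X ^ 2`. This is nonzero because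
`T` is transcendental over `ℚ(X)` and `X` is transcendental over `ℚ`. -/

/-! The field `K = ℚ(X, T)` of rational functions in two variables, realized as
`RatFunc (RatFunc ℚ)`: `X` is the constant `RatFunc.X` of the inner field and
`T` is the variable of the outer field. -/

/-- The variable `X` of `K = ℚ(X, T)`. -/
noncomputable def Xv : RatFunc (RatFunc ℚ) := RatFunc.C RatFunc.X

/-- The variable `T` of `K = ℚ(X, T)`. -/
noncomputable def Tv : RatFunc (RatFunc ℚ) := RatFunc.X

/-- `L = X⁶`. -/
noncomputable def Lv : RatFunc (RatFunc ℚ) := Xv ^ 6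

/-- `G(N,ν) = (L−1)·T^N / (L^ν − T^N)`, the rational-function image of
`(𝕃−1)/(𝕃^{Ns+ν}−1)` under `𝕃 = X⁶`, `T = 𝕃^{−s}`. -/
noncomputable def G (N ν : ℕ) : RatFunc (RatFunc ℚ) :=
  (Lv - 1) * Tv ^ N / (Lv ^ ν - Tv ^ N)

/-- `A = X⁶ + X⁴ + X³ + X²`, the stringy motive `𝕃−2+(𝕃−1)/(𝕃^{1/2}−1)+(𝕃−1)/(𝕃^{1/3}−1)`. -/
noncomputable def Av : RatFunc (RatFunc ℚ) := Xv ^ 6 + Xv ^ 4 + Xv ^ 3 + Xv ^ 2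

/-- The relevant part of the dlt motivic zeta function on the dlt modification `X₁`. -/
noncomputable def Z₁ : RatFunc (RatFunc ℚ) :=
  Lv ^ (-3 : ℤ) * (Av * G 12 10 * G 6 5 + G 1 1 * G 12 10 * G 6 5)

/-- The relevant part of the dlt motivic zeta function on the dlt modification `X₂`. -/
noncomputable def Z₂ : RatFunc (RatFunc ℚ) :=
  Lv ^ (-3 : ℤ) * ((Lv ^ 2 - Lv) * G 18 15 + (Lv - 1) * G 1 1 * G 18 15
    + Av * G 12 10 * G 18 15 + G 1 1 * G 12 10 * G 18 15
    + Av * G 6 5 * G 18 15 + G 1 1 * G 6 5 * G 18 15)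

/-- No positive power of the variable of `F(x)` is a constant. -/
lemma C_ne_X_pow {F : Type*} [Field F] (c : F) {N : ℕ} (hN : N ≠ 0) :
    (RatFunc.C c : RatFunc F) ≠ RatFunc.X ^ N := by
  intro h
  rw [← RatFunc.algebraMap_C, ← RatFunc.algebraMap_X, ← map_pow] at h
  have h' := congrArg Polynomial.natDegree (RatFunc.algebraMap_injective F h)
  rw [Polynomial.natDegree_C, Polynomial.natDegree_X_pow] at h'
  exact hN h'.symm

lemma Lv_pow_sub_Tv_pow_ne_zero (ν : ℕ) {N : ℕ} (hN : N ≠ 0) : Lv ^ ν - Tv ^ N ≠ 0 := by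
  have h := C_ne_X_pow (((RatFunc.X : RatFunc ℚ) ^ 6) ^ ν) hN
  rw [map_pow, map_pow] at h
  exact sub_ne_zero.mpr h

lemma Xv_ne_zero : Xv ≠ 0 := (map_ne_zero _).mpr RatFunc.X_ne_zero

lemma Lv_sub_one_ne_zero : Lv - 1 ≠ 0 := by
  have h := C_ne_X_pow (1 : ℚ) (N := 6) (by norm_num)
  intro h0
  apply h
  apply (RatFunc.C : RatFunc ℚ →+* RatFunc (RatFunc ℚ)).injective
  rw [map_pow, map_one, map_one]
  exact (sub_eq_zero.mp h0).symm

lemma Xv_pow_sum_ne_zero : Xv ^ 4 + Xv ^ 3 + Xv ^ 2 ≠ 0 := by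
  have hp : (Polynomial.X ^ 4 + Polynomial.X ^ 3 + Polynomial.X ^ 2 : Polynomial ℚ) ≠ 0 := by
    intro h
    have := congrArg (Polynomial.eval 1) h
    norm_num at this
  have h := (map_ne_zero (RatFunc.C : RatFunc ℚ →+* RatFunc (RatFunc ℚ))).mpr
    (RatFunc.algebraMap_ne_zero hp)
  simpa [Xv] using h

/-- The relation between two zeta factors and the one of the exceptional divisor obtained by
blowing up the intersection of the corresponding divisors. -/
lemma G_mul_G {N₁ N₂ : ℕ} (ν₁ ν₂ : ℕ) (h₁ : N₁ ≠ 0) (h₂ : N₂ ≠ 0) :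
    G N₁ ν₁ * G N₂ ν₂ = G (N₁ + N₂) (ν₁ + ν₂) * (Lv - 1 + G N₁ ν₁ + G N₂ ν₂) := by
  have d₁ := Lv_pow_sub_Tv_pow_ne_zero ν₁ h₁
  have d₂ := Lv_pow_sub_Tv_pow_ne_zero ν₂ h₂
  have d₃ := Lv_pow_sub_Tv_pow_ne_zero (ν₁ + ν₂) (N := N₁ + N₂) (by omega)
  unfold G
  rw [pow_add, pow_add] at *
  generalize Lv ^ ν₁ = a, Lv ^ ν₂ = b, Tv ^ N₁ = s, Tv ^ N₂ = t at *
  field_simp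
  ring

/-- The two dlt motivic zeta functions computed on dlt modifications connected by a
blow-up differ: `Z₁ − Z₂ = L⁻³·(X⁴+X³+X²)·(L−1)²·T¹⁸/(L¹⁵−T¹⁸) ≠ 0`. -/
theorem blowup_counterexample :
    Z₁ - Z₂ = Lv ^ (-3 : ℤ) * (Xv ^ 4 + Xv ^ 3 + Xv ^ 2) * (Lv - 1) ^ 2 * Tv ^ 18
        / (Lv ^ 15 - Tv ^ 18) ∧
      Z₁ ≠ Z₂ := by
  have key : Z₁ - Z₂ = Lv ^ (-3 : ℤ) * (Xv ^ 4 + Xv ^ 3 + Xv ^ 2) * (Lv - 1) ^ 2 * Tv ^ 18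
      / (Lv ^ 15 - Tv ^ 18) := by
    have hG := G_mul_G (N₁ := 12) (N₂ := 6) 10 5 (by norm_num) (by norm_num)
    norm_num only at hG
    have hA : Av = Lv + (Xv ^ 4 + Xv ^ 3 + Xv ^ 2) := by
      unfold Av Lv
      ring
    have h18 : G 18 15 = (Lv - 1) * Tv ^ 18 / (Lv ^ 15 - Tv ^ 18) := rfl
    calc Z₁ - Z₂ = Lv ^ (-3 : ℤ) * (Xv ^ 4 + Xv ^ 3 + Xv ^ 2) * (Lv - 1) * G 18 15 := by
          unfold Z₁ Z₂
          rw [hA]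
          linear_combination
            Lv ^ (-3 : ℤ) * (Lv + (Xv ^ 4 + Xv ^ 3 + Xv ^ 2) + G 1 1) * hG
      _ = _ := by
          rw [h18]
          ring
  refine ⟨key, fun h => ?_⟩
  rw [h, sub_self] at key
  have hL : Lv ≠ 0 := pow_ne_zero 6 Xv_ne_zero
  have hT : Tv ≠ 0 := RatFunc.X_ne_zero
  exact div_ne_zero (mul_ne_zero (mul_ne_zero (mul_ne_zero (zpow_ne_zero _ hL) Xv_pow_sum_ne_zero)
    (pow_ne_zero 2 Lv_sub_one_ne_zero)) (pow_ne_zero 18 hT))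
    (Lv_pow_sub_Tv_pow_ne_zero 15 (by norm_num)) key.symm
end

section
/- Define φ : ℝ³ → ℝ by φ(v) = min{ v₃/2, v₂, 2v₁/3, (v₁+v₂)/3 }. Then: (1) for every v in the cone of nonnegative combinations of (1,0,0), (0,1,0), (2,1,2), φ(v) = v₃/2; (2) for every v in the cone of nonnegative combinations of (1,0,0), (0,0,1), (2,1,2), φ(v) = v₂; (3) for every v in the cone of nonnegative combinations of (0,1,0), (0,0,1), (3,3,4), φ(v) = 2v₁/3; (4) for every v in the cone of nonnegative combinations of (0,1,0), (3,3,4), (2,1,2), φ(v) = v₃/2; (5) for every v in the cone of nonnegative combinations of (0,0,1), (3,3,4), (2,1,2), φ(v) = (v₁+v₂)/3. Moreover φ(1,0,0) = φ(0,1,0) = φ(0,0,1) = 0, φ(3,3,4) = 2, φ(2,1,2) = 1, and φ(5,4,6) = 3. -/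
/-- The support function `φ₁` of the divisor `F₁ = −2E₁ − E₂` on the toric variety
`X₁`: `φ(v) = min{ v₃/2, v₂, 2v₁/3, (v₁+v₂)/3 }`. -/
noncomputable def φ (v : ℝ × ℝ × ℝ) : ℝ :=
  min (min (v.2.2 / 2) v.2.1) (min (2 * v.1 / 3) ((v.1 + v.2.1) / 3))

/-- `v` lies in the cone of nonnegative combinations of `u₁, u₂, u₃`. -/
def inCone (u₁ u₂ u₃ v : ℝ × ℝ × ℝ) : Prop :=
  ∃ a b c : ℝ, 0 ≤ a ∧ 0 ≤ b ∧ 0 ≤ c ∧ v = a • u₁ + b • u₂ + c • u₃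

/-- `φ` is linear on each maximal cone of the fan `Σ₁`, with the indicated linear
forms, and takes the values `0, 0, 0, 2, 1, 3` on the ray generators. -/
theorem support_function_linear_on_cones :
    (∀ v, inCone (1, 0, 0) (0, 1, 0) (2, 1, 2) v → φ v = v.2.2 / 2) ∧
    (∀ v, inCone (1, 0, 0) (0, 0, 1) (2, 1, 2) v → φ v = v.2.1) ∧
    (∀ v, inCone (0, 1, 0) (0, 0, 1) (3, 3, 4) v → φ v = 2 * v.1 / 3) ∧
    (∀ v, inCone (0, 1, 0) (3, 3, 4) (2, 1, 2) v → φ v = v.2.2 / 2) ∧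
    (∀ v, inCone (0, 0, 1) (3, 3, 4) (2, 1, 2) v → φ v = (v.1 + v.2.1) / 3) ∧
    φ (1, 0, 0) = 0 ∧ φ (0, 1, 0) = 0 ∧ φ (0, 0, 1) = 0 ∧
    φ (3, 3, 4) = 2 ∧ φ (2, 1, 2) = 1 ∧ φ (5, 4, 6) = 3 := by
  -- On each cone every one of the four linear forms exceeds the claimed one by a nonnegative
  -- combination of the coefficients `a`, `b`, `c`.
  refine ⟨?_, ?_, ?_, ?_, ?_, ?_, ?_, ?_, ?_, ?_, ?_⟩
  iterate 5
    · rintro _ ⟨a, b, c, ha, hb, hc, rfl⟩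
      simp only [φ, Prod.smul_mk, Prod.mk_add_mk, smul_eq_mul]
      apply le_antisymm
      · simp only [min_le_iff]
        simp
      · refine le_min (le_min ?_ ?_) (le_min ?_ ?_) <;> linarith
  all_goals norm_num [φ]
end

section
/- Every vector v = (v₁,v₂,v₃) ∈ ℝ³ with v₁, v₂, v₃ ≥ 0 lies in at least one of the following five cones: the nonnegative span of {(1,0,0),(0,1,0),(2,1,2)}, of {(1,0,0),(0,0,1),(2,1,2)}, of {(0,1,0),(0,0,1),(3,3,4)}, of {(0,1,0),(3,3,4),(2,1,2)}, and of {(0,0,1),(3,3,4),(2,1,2)}. -/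
/-- The five maximal cones of the fan `Σ₁` cover the positive octant `ℝ³_{≥0}`. -/
theorem fan_Sigma1_covers :
    ∀ v : ℝ × ℝ × ℝ, 0 ≤ v.1 → 0 ≤ v.2.1 → 0 ≤ v.2.2 →
      inCone (1, 0, 0) (0, 1, 0) (2, 1, 2) v ∨
      inCone (1, 0, 0) (0, 0, 1) (2, 1, 2) v ∨
      inCone (0, 1, 0) (0, 0, 1) (3, 3, 4) v ∨
      inCone (0, 1, 0) (3, 3, 4) (2, 1, 2) v ∨
      inCone (0, 0, 1) (3, 3, 4) (2, 1, 2) v := by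
  rintro ⟨x, y, z⟩ hx hy hz
  dsimp only at hx hy hz
  by_cases h1 : z ≤ x ∧ z ≤ 2 * y
  · refine Or.inl ⟨x - z, y - z / 2, z / 2, by linarith, by linarith, by linarith, ?_⟩
    ext <;> simp <;> ring
  by_cases h2 : 2 * y ≤ x ∧ 2 * y ≤ z
  · refine Or.inr (Or.inl ⟨x - 2 * y, z - 2 * y, y, by linarith, by linarith, hy, ?_⟩)
    ext <;> simp <;> ring
  by_cases h3 : x ≤ y ∧ 4 * x ≤ 3 * z
  · refine Or.inr (Or.inr (Or.inl
      ⟨y - x, z - 4 * x / 3, x / 3, by linarith, by linarith, by linarith, ?_⟩))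
    ext <;> simp <;> ring
  have hxz : x < z := by grind
  have hxy : x < 2 * y := by grind
  rcases le_total (3 * z) (2 * x + 2 * y) with h | h
  · have h4 : 3 * z ≤ 4 * x := by grind
    refine Or.inr (Or.inr (Or.inr (Or.inl
      ⟨x + y - 3 * z / 2, z - x, (4 * x - 3 * z) / 2,
        by linarith, by linarith, by linarith, ?_⟩)))
    ext <;> simp <;> ring
  · have h5 : y ≤ x := by grind
    refine Or.inr (Or.inr (Or.inr (Or.inr
      ⟨z - 2 * (x + y) / 3, (2 * y - x) / 3, x - y,
        by linarith, by linarith, by linarith, ?_⟩)))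
    ext <;> simp <;> ring
end

section
/- Every vector v = (v₁,v₂,v₃) ∈ ℝ³ with v₁, v₂, v₃ ≥ 0 lies in at least one of the following five cones: the nonnegative span of {(0,1,0),(0,0,1),(3,3,4)}, of {(0,0,1),(3,3,4),(2,1,2)}, of {(0,0,1),(2,1,2),(1,0,0)}, of {(1,0,0),(3,3,4),(2,1,2)}, and of {(1,0,0),(0,1,0),(3,3,4)}. -/
/-- The five maximal cones of the fan `Σ_B` (obtained from `Σ₁` by a flop)
cover the positive octant `ℝ³_{≥0}`. -/
theorem fan_SigmaB_covers :
    ∀ v : ℝ × ℝ × ℝ, 0 ≤ v.1 → 0 ≤ v.2.1 → 0 ≤ v.2.2 →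
      inCone (0, 1, 0) (0, 0, 1) (3, 3, 4) v ∨
      inCone (0, 0, 1) (3, 3, 4) (2, 1, 2) v ∨
      inCone (0, 0, 1) (2, 1, 2) (1, 0, 0) v ∨
      inCone (1, 0, 0) (3, 3, 4) (2, 1, 2) v ∨
      inCone (1, 0, 0) (0, 1, 0) (3, 3, 4) v := by
  rintro ⟨x, y, z⟩ hx hy hz
  simp only at hx hy hz
  have h₁ : x ≤ y → 4 * x ≤ 3 * z → inCone (0, 1, 0) (0, 0, 1) (3, 3, 4) (x, y, z) := by
    intro h h'
    refine ⟨y - x, z - 4 * x / 3, x / 3, by linarith, by linarith, by linarith, ?_⟩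
    ext <;> simp <;> ring
  have h₂ : y ≤ x → x ≤ 2 * y → 2 * x + 2 * y ≤ 3 * z →
      inCone (0, 0, 1) (3, 3, 4) (2, 1, 2) (x, y, z) := by
    intro h h' h''
    refine ⟨z - (2 * x + 2 * y) / 3, (2 * y - x) / 3, x - y,
      by linarith, by linarith, by linarith, ?_⟩
    ext <;> simp <;> ring
  have h₃ : 2 * y ≤ x → 2 * y ≤ z → inCone (0, 0, 1) (2, 1, 2) (1, 0, 0) (x, y, z) := by
    intro h h'
    refine ⟨z - 2 * y, y, x - 2 * y, by linarith, by linarith, by linarith, ?_⟩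
    ext <;> simp <;> ring
  have h₄ : 4 * y ≤ 3 * z → z ≤ 2 * y → 3 * z ≤ 2 * x + 2 * y →
      inCone (1, 0, 0) (3, 3, 4) (2, 1, 2) (x, y, z) := by
    intro h h' h''
    refine ⟨x + y - 3 * z / 2, (2 * y - z) / 2, (3 * z - 4 * y) / 2,
      by linarith, by linarith, by linarith, ?_⟩
    ext <;> simp <;> ring
  have h₅ : 3 * z ≤ 4 * x → 3 * z ≤ 4 * y →
      inCone (1, 0, 0) (0, 1, 0) (3, 3, 4) (x, y, z) := by
    intro h h'
    refine ⟨x - 3 * z / 4, y - 3 * z / 4, z / 4, by linarith, by linarith, by linarith, ?_⟩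
    ext <;> simp <;> ring
  rcases le_or_gt (3 * z) (4 * y) with hzy | hzy
  · rcases le_or_gt (3 * z) (4 * x) with hzx | hzx
    · exact .inr (.inr (.inr (.inr (h₅ hzx hzy))))
    · exact .inl (h₁ (by linarith) hzx.le)
  rcases le_or_gt x y with hxy | hxy
  · exact .inl (h₁ hxy (by linarith))
  rcases le_or_gt z (2 * y) with hz2 | hz2
  · rcases le_or_gt (3 * z) (2 * x + 2 * y) with hs | hs
    · exact .inr (.inr (.inr (.inl (h₄ hzy.le hz2 hs))))
    · exact .inr (.inl (h₂ hxy.le (by linarith) hs.le))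
  · rcases le_or_gt (2 * y) x with hx2 | hx2
    · exact .inr (.inr (.inl (h₃ hx2 hz2.le)))
    · exact .inr (.inl (h₂ hxy.le hx2.le (by linarith)))
end
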